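/- (Optimal altitude guarding) For every terrain T with altitude line A at height h, there exist a finite guard cover G ⊆ A (every point of T is seen by some g ∈ G) and a finite witness set W ⊆ T (the sets V_A(w) for w ∈ W are pairwise disjoint) with Set.ncard G = Set.ncard W. Consequently, every guard cover G' ⊆ A satisfies Set.ncard G ≤ Set.ncard G', i.e. G is a minimum-cardinality guard cover. -/

import Mathlib

/-!
The part of the altitude line seen from a terrain point is star-shaped about the point above it and
closed, hence a closed interval. The region above a terrain edge is convex, so every point of the
edge sees the altitude line above the left vertex of the edge; thus finitely many points meet all
these intervals.

For closed intervals with a finite transversal, a greedy sweep produces a transversal no larger than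
some pairwise disjoint subfamily: put a guard at the infimum `g` of the right endpoints, treat the
intervals starting after `g` recursively, and add as a witness one interval that ends before all
witnesses of the recursion begin. Although the infimum need not be attained, this last interval
exists because the recursion yields only finitely many witnesses, all starting strictly after `g`.
-/

open Set

/-- The terrain: union of the closed segments `[v i, v (i+1)]`, `i = 0, …, n-2`. -/
def terrain (n : ℕ) (hn : 2 ≤ n) (v : Fin n → ℝ × ℝ) : Set (ℝ × ℝ) :=
  ⋃ i : Fin (n - 1), segment ℝ (v (Fin.castLE (by omega) i)) (v (Fin.cast (by omega) i.succ))

/-- A point `r` is on or above the terrain `T`. -/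
def onAbove (T : Set (ℝ × ℝ)) (r : ℝ × ℝ) : Prop :=
  ∀ t ∈ T, t.1 = r.1 → t.2 ≤ r.2

/-- `p` sees `q` (w.r.t. terrain `T`): every point of the segment `[p,q]` is on or above `T`. -/
def seesT (T : Set (ℝ × ℝ)) (p q : ℝ × ℝ) : Prop :=
  ∀ x ∈ segment ℝ p q, onAbove T x

/-- The altitude line at height `h`: the segment from `((v 0).1, h)` to `((v (n-1)).1, h)`. -/
def altLine (n : ℕ) (hn : 2 ≤ n) (v : Fin n → ℝ × ℝ) (h : ℝ) : Set (ℝ × ℝ) :=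
  segment ℝ ((v ⟨0, by omega⟩).1, h) ((v ⟨n - 1, by omega⟩).1, h)

/-- Visibility region on the terrain of a point `g` of the altitude line. -/
def visT (n : ℕ) (hn : 2 ≤ n) (v : Fin n → ℝ × ℝ) (g : ℝ × ℝ) : Set (ℝ × ℝ) :=
  {q | q ∈ terrain n hn v ∧ seesT (terrain n hn v) g q}

/-- Visibility region on the altitude line of a point `w` of the terrain. -/
def visA (n : ℕ) (hn : 2 ≤ n) (v : Fin n → ℝ × ℝ) (h : ℝ) (w : ℝ × ℝ) : Set (ℝ × ℝ) :=
  {p | p ∈ altLine n hn v h ∧ seesT (terrain n hn v) w p}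

section Transversals

variable {ι α β : Type*} {S W : Set ι} {I : ι → Set α} {G : Set α}

/-- `G` is a transversal (piercing set) of the sets `I i`, `i ∈ S`: it meets each of them. With
`I = visA …` and `S` the terrain, the transversals inside the altitude line are the guard covers. -/
def IsTransversal (S : Set ι) (I : ι → Set α) (G : Set α) : Prop :=
  ∀ i ∈ S, (I i ∩ G).Nonempty

theorem IsTransversal.mono {S' : Set ι} (hG : IsTransversal S I G) (hS : S' ⊆ S) :
    IsTransversal S' I G :=
  fun i hi => hG i (hS hi)

theorem IsTransversal.image (hG : IsTransversal S I G) (e : α → β) :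
    IsTransversal S (fun i => e '' I i) (e '' G) :=
  fun i hi => ((hG i hi).image e).mono (image_inter_subset e _ _)

theorem IsTransversal.inter_iUnion (hG : IsTransversal S I G) :
    IsTransversal S I (G ∩ ⋃ i ∈ S, I i) :=
  fun i hi => (hG i hi).imp fun _ hx => ⟨hx.1, hx.2, mem_biUnion hi hx.1⟩

theorem IsTransversal.ncard_le (hG : IsTransversal S I G) (hfin : G.Finite)
    (hdisj : S.PairwiseDisjoint I) : S.ncard ≤ G.ncard := by
  rcases S.eq_empty_or_nonempty with rfl | ⟨i₀, hi₀⟩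
  · exact ncard_empty ι ▸ Nat.zero_le _
  have : Nonempty α := (hG i₀ hi₀).nonempty
  choose! f hf using hG
  exact ncard_le_ncard_of_injOn f (fun i hi => (hf i hi).2)
    (fun i hi j hj hij => hdisj.elim_set hi hj (f i) (hf i hi).1 (hij ▸ (hf j hj).1)) hfin

theorem IsTransversal.exists_mem_lowerBounds_right [LinearOrder α] {a b : ι → α} (hS : S.Nonempty)
    (hG : IsTransversal S (fun i => Icc (a i) (b i)) G) (hfin : G.Finite) :
    ∃ g ∈ G, g ∈ lowerBounds (b '' S) := by
  have hne : G.Nonempty := hS.elim fun i hi => (hG i hi).right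
  obtain ⟨g, hg, hg_min⟩ := exists_min_image G id hfin hne
  refine ⟨g, hg, ?_⟩
  rintro _ ⟨i, hi, rfl⟩
  obtain ⟨x, hxI, hxG⟩ := hG i hi
  exact (hg_min x hxG).trans hxI.2

end Transversals

section Intervals

variable {ι α β : Type*} [ConditionallyCompleteLinearOrder α] {S W : Set ι} {a b : ι → α}

theorem exists_right_lt_left_of_sInf_lt (hS : S.Nonempty) (hW : W.Finite)
    (hlt : ∀ j ∈ W, sInf (b '' S) < a j) : ∃ i ∈ S, ∀ j ∈ W, b i < a j := by
  rcases W.eq_empty_or_nonempty with rfl | hWne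
  · exact hS.imp fun i hi => ⟨hi, fun _ hj => hj.elim⟩
  · obtain ⟨k, hk, hk_min⟩ := exists_min_image W a hW hWne
    obtain ⟨_, ⟨i, hi, rfl⟩, hik⟩ := exists_lt_of_csInf_lt (hS.image b) (hlt k hk)
    exact ⟨i, hi, fun j hj => hik.trans_le (hk_min j hj)⟩

theorem IsTransversal.exists_ncard_le_packing {P : Set α}
    (hP : IsTransversal S (fun i => Icc (a i) (b i)) P) (hfin : P.Finite) :
    ∃ (G : Set α) (W : Set ι), G.Finite ∧ W.Finite ∧ W ⊆ S ∧
      IsTransversal S (fun i => Icc (a i) (b i)) G ∧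
      W.PairwiseDisjoint (fun i => Icc (a i) (b i)) ∧ G.ncard ≤ W.ncard := by
  induction hn : P.ncard using Nat.strong_induction_on generalizing P S with
  | _ n ih =>
  rcases S.eq_empty_or_nonempty with rfl | hS
  · exact ⟨∅, ∅, finite_empty, finite_empty, Subset.rfl, fun i hi => hi.elim,
      pairwiseDisjoint_empty, by rw [ncard_empty, ncard_empty]⟩
  obtain ⟨p, hpP, hp⟩ := hP.exists_mem_lowerBounds_right hS hfin
  let g := sInf (b '' S)
  have hpg : p ≤ g := le_csInf (hS.image b) hp
  have hg_le : ∀ i ∈ S, g ≤ b i := fun i hi => csInf_le ⟨p, hp⟩ (mem_image_of_mem b hi)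
  have hP_right : IsTransversal {i ∈ S | g < a i} (fun i => Icc (a i) (b i)) {q ∈ P | g < q} :=
    fun i hi => (hP i hi.1).imp fun q hq => ⟨hq.1, hq.2, hi.2.trans_le hq.1.1⟩
  have hP_lt : {q ∈ P | g < q}.ncard < n :=
    hn ▸ ncard_lt_ncard ⟨sep_subset P _, fun h => (h hpP).2.not_ge hpg⟩ hfin
  obtain ⟨G, W, hGfin, hWfin, hWS, hG, hW, hcard⟩ :=
    ih _ hP_lt hP_right (hfin.subset (sep_subset P _)) rfl
  obtain ⟨i₀, hi₀, hi₀_lt⟩ := exists_right_lt_left_of_sInf_lt hS hWfin fun j hj => (hWS hj).2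
  have hi₀_le : a i₀ ≤ b i₀ := (hP i₀ hi₀).elim fun q hq => hq.1.1.trans hq.1.2
  have hi₀W : i₀ ∉ W := fun hi => (hi₀_lt i₀ hi).not_ge hi₀_le
  refine ⟨insert g G, insert i₀ W, hGfin.insert g, hWfin.insert i₀,
    insert_subset hi₀ fun j hj => (hWS hj).1, fun i hi => ?_, ?_, ?_⟩
  · rcases lt_or_ge g (a i) with hgi | hig
    · exact (hG i ⟨hi, hgi⟩).mono (inter_subset_inter_right _ (subset_insert g G))
    · exact ⟨g, ⟨hig, hg_le i hi⟩, mem_insert g G⟩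
  · refine hW.insert fun j hj _ => disjoint_left.2 fun x hx hxj => ?_
    exact (hi₀_lt j hj).not_ge (hxj.1.trans hx.2)
  · rw [ncard_insert_of_notMem hi₀W hWfin]
    exact (ncard_insert_le g G).trans (Nat.succ_le_succ hcard)

theorem IsTransversal.exists_ncard_eq_packing {I : ι → Set β} {P : Set β} {e : α → β}
    (hP : IsTransversal S I P) (hfin : P.Finite) (he : Function.Injective e)
    (hI : ∀ i ∈ S, I i = e '' Icc (a i) (b i)) :
    ∃ (G : Set β) (W : Set ι), G.Finite ∧ G ⊆ ⋃ i ∈ S, I i ∧ IsTransversal S I G ∧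
      W.Finite ∧ W ⊆ S ∧ W.PairwiseDisjoint I ∧ G.ncard = W.ncard := by
  have heP : IsTransversal S (fun i => Icc (a i) (b i)) (e ⁻¹' P) := fun i hi => by
    obtain ⟨_, hxI, hxP⟩ := hP i hi
    obtain ⟨x, hx, rfl⟩ := hI i hi ▸ hxI
    exact ⟨x, hx, hxP⟩
  obtain ⟨G, W, hGfin, hWfin, hWS, hG, hW, hcard⟩ :=
    heP.exists_ncard_le_packing (hfin.preimage he.injOn)
  have heG : IsTransversal S I (e '' G) := fun i hi => hI i hi ▸ hG.image e i hi
  have hWI : W.PairwiseDisjoint I := fun i hi j hj hij => by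
    rw [Function.onFun, hI i (hWS hi), hI j (hWS hj), disjoint_image_iff he]
    exact hW hi hj hij
  have hfin' : (e '' G ∩ ⋃ i ∈ S, I i).Finite := (hGfin.image e).inter_of_left _
  refine ⟨_, W, hfin', inter_subset_right, heG.inter_iUnion, hWfin, hWS, hWI, le_antisymm ?_ ?_⟩
  · calc (e '' G ∩ ⋃ i ∈ S, I i).ncard
        ≤ (e '' G).ncard := ncard_le_ncard inter_subset_left (hGfin.image e)
      _ ≤ G.ncard := ncard_image_le hGfin
      _ ≤ W.ncard := hcard
  · exact (heG.inter_iUnion.mono hWS).ncard_le hfin' hWI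

end Intervals

section Visibility

variable {T : Set (ℝ × ℝ)} {p q w : ℝ × ℝ} {h : ℝ}

theorem seesT_comm : seesT T p q ↔ seesT T q p := by
  rw [seesT, seesT, segment_symm]

theorem seesT_iff_forall_mem_Icc : seesT T p q ↔ ∀ t ∈ T, ∀ s ∈ Icc (0 : ℝ) 1,
    t.1 = p.1 + s * (q.1 - p.1) → t.2 ≤ p.2 + s * (q.2 - p.2) := by
  rw [seesT, segment_eq_image', forall_mem_image]
  exact ⟨fun H t ht s hs => H hs t ht, fun H s hs t ht => H t ht s hs⟩

-- The sight line to a nearer point of the altitude line runs above the one to a farther point.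
theorem starConvex_setOf_seesT (hw : w.2 ≤ h) :
    StarConvex ℝ w.1 {x | seesT T w (x, h)} := by
  intro x hx a b _ hb hab
  rw [mem_ofPred_eq, seesT_iff_forall_mem_Icc] at hx ⊢
  intro t ht s hs hts
  have hb1 : b ≤ 1 := by linarith
  have hbs : s * b ≤ s := mul_le_of_le_one_right hs.1 hb1
  have ht1 : t.1 = w.1 + s * b * (x - w.1) := by
    rw [hts, eq_sub_of_add_eq hab]
    simp only [smul_eq_mul]
    ring
  calc t.2 ≤ w.2 + s * b * (h - w.2) := hx t ht _ ⟨mul_nonneg hs.1 hb, hbs.trans hs.2⟩ ht1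
    _ ≤ w.2 + s * (h - w.2) := by gcongr

theorem isClosed_setOf_seesT (hw : w.2 ≤ h) (hT : ∀ t ∈ T, t.2 ≤ h) :
    IsClosed {x | seesT T w (x, h)} := by
  refine isClosed_of_closure_subset fun y hy => seesT_iff_forall_mem_Icc.2 fun t ht s hs hts => ?_
  have hfreq := mem_closure_iff_frequently.1 hy
  obtain ⟨x, hx⟩ := hfreq.exists
  rcases eq_or_ne t.1 w.1 with htw | htw
  · have ht2 : t.2 ≤ w.2 := by
      simpa using seesT_iff_forall_mem_Icc.1 hx t ht 0 ⟨le_rfl, zero_le_one⟩ (by simp [htw])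
    exact ht2.trans (le_add_of_nonneg_right (mul_nonneg hs.1 (sub_nonneg.2 hw)))
  rcases hs.2.eq_or_lt with rfl | hs1
  · simpa using hT t ht
  have hsy : s * (y - w.1) ≠ 0 := fun h0 => htw (by rw [hts, h0, add_zero])
  have hs0 : 0 < s := hs.1.lt_of_ne' (left_ne_zero_of_mul hsy)
  have hyw : y - w.1 ≠ 0 := right_ne_zero_of_mul hsy
  -- The parameter at which the sight line from `w` to `(x, h)` passes the abscissa of `t`.
  let σ : ℝ → ℝ := fun x => s * (y - w.1) / (x - w.1)
  have hσy : σ y = s := mul_div_cancel_right₀ s hyw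
  have hσ : ContinuousAt σ y := by fun_prop (disch := exact hyw)
  have hσ_mem : ∀ᶠ x in nhds y, σ x ∈ Ioo 0 1 :=
    hσ.eventually_mem (hσy ▸ Ioo_mem_nhds hs0 hs1)
  have hne : ∀ᶠ x in nhds y, x ≠ w.1 := eventually_ne_nhds (sub_ne_zero.1 hyw)
  have hle : ∃ᶠ x in nhds y, t.2 ≤ w.2 + σ x * (h - w.2) :=
    (hfreq.and_eventually (hσ_mem.and hne)).mono fun x ⟨hx, hσx, hxw⟩ =>
      seesT_iff_forall_mem_Icc.1 hx t ht (σ x) (Ioo_subset_Icc_self hσx)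
        (by rw [hts, div_mul_cancel₀ _ (sub_ne_zero.2 hxw)])
  have hlim : Filter.Tendsto (fun x => w.2 + σ x * (h - w.2)) (nhds y)
      (nhds (w.2 + s * (h - w.2))) := hσy ▸ ((hσ.mul_const _).const_add _)
  exact ge_of_tendsto_of_frequently hlim hle

theorem exists_inter_setOf_seesT_eq_Icc {L R : ℝ} (hw : w.2 ≤ h) (hT : ∀ t ∈ T, t.2 ≤ h)
    (hwLR : w.1 ∈ Icc L R) (hne : {x | seesT T w (x, h)}.Nonempty) :
    ∃ a b, Icc L R ∩ {x | seesT T w (x, h)} = Icc a b := by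
  have hstar := starConvex_setOf_seesT (T := T) hw
  have hw_mem := hstar.mem hne
  have hconn : IsConnected (Icc L R ∩ {x | seesT T w (x, h)}) :=
    ⟨⟨w.1, hwLR, hw_mem⟩, (ordConnected_Icc.inter (hstar.ordConnected hw_mem)).isPreconnected⟩
  exact ⟨_, _, eq_Icc_of_connected_compact hconn
    (isCompact_Icc.inter_right (isClosed_setOf_seesT hw hT))⟩

end Visibility

section Chains

/-- The points lying on or vertically above some point of `K`; for a terrain edge `K` this is the
region in which sight lines are obstructed neither by `K` nor by any other edge. -/
def verticalHull (K : Set (ℝ × ℝ)) : Set (ℝ × ℝ) :=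
  {r | ∃ u ∈ K, u.1 = r.1 ∧ u.2 ≤ r.2}

theorem convex_verticalHull {K : Set (ℝ × ℝ)} (hK : Convex ℝ K) : Convex ℝ (verticalHull K) := by
  rintro x ⟨u, hu, hux, hux'⟩ y ⟨v, hv, hvy, hvy'⟩ a b ha hb hab
  refine ⟨a • u + b • v, hK hu hv ha hb hab, ?_, ?_⟩
  · simp only [Prod.fst_add, Prod.smul_fst, hux, hvy]
  · simp only [Prod.snd_add, Prod.smul_snd, smul_eq_mul]
    gcongr

theorem fst_mem_segment {p q t : ℝ × ℝ} (ht : t ∈ segment ℝ p q) : t.1 ∈ segment ℝ p.1 q.1 :=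
  image_segment ℝ (LinearMap.fst ℝ ℝ ℝ).toAffineMap p q ▸ mem_image_of_mem Prod.fst ht

theorem injOn_fst_segment {p q : ℝ × ℝ} (hpq : p.1 ≠ q.1) : InjOn Prod.fst (segment ℝ p q) := by
  rw [segment_eq_image_lineMap]
  rintro _ ⟨s, -, rfl⟩ _ ⟨r, -, rfl⟩ hsr
  rw [AffineMap.fst_lineMap, AffineMap.fst_lineMap] at hsr
  rw [AffineMap.lineMap_injective ℝ hpq hsr]

variable {ι : Type*} [LinearOrder ι] {v : ι → ℝ × ℝ} {i j k l : ι} {t : ℝ × ℝ}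

theorem fst_mem_Icc_of_mem_segment (hv : StrictMono fun i => (v i).1) (hij : i < j)
    (ht : t ∈ segment ℝ (v i) (v j)) : t.1 ∈ Icc (v i).1 (v j).1 :=
  segment_eq_Icc (𝕜 := ℝ) (hv hij).le ▸ fst_mem_segment ht

theorem mem_segment_of_fst_mem_Icc (hv : StrictMono fun i => (v i).1) (hij : i ⋖ j) (hkl : k ⋖ l)
    (ht : t ∈ segment ℝ (v k) (v l)) (hti : t.1 ∈ Icc (v i).1 (v j).1) :
    t ∈ segment ℝ (v i) (v j) := by
  have htk := fst_mem_Icc_of_mem_segment hv hkl.lt ht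
  have hinj := injOn_fst_segment (hv hkl.lt).ne
  rcases lt_trichotomy i k with hik | rfl | hki
  · have hjk : j = k :=
      (hij.ge_of_gt hik).antisymm (hv.le_iff_le.1 (htk.1.trans hti.2))
    subst hjk
    rw [hinj ht (left_mem_segment ℝ _ _) (hti.2.antisymm htk.1)]
    exact right_mem_segment ℝ _ _
  · rwa [hij.unique_right hkl]
  · have hli : l = i :=
      (hkl.ge_of_gt hki).antisymm (hv.le_iff_le.1 (hti.1.trans htk.2))
    subst hli
    rw [hinj ht (right_mem_segment ℝ _ _) (htk.2.antisymm hti.1)]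
    exact left_mem_segment ℝ _ _

end Chains

section Terrain

variable {n : ℕ} {hn : 2 ≤ n} {v : Fin n → ℝ × ℝ} {h : ℝ} {i j : Fin n} {p q w t : ℝ × ℝ}

theorem exists_covBy_of_mem_terrain (ht : t ∈ terrain n hn v) :
    ∃ i j, i ⋖ j ∧ t ∈ segment ℝ (v i) (v j) := by
  obtain ⟨i, hi⟩ := mem_iUnion.1 ht
  exact ⟨_, _, Fin.covBy_iff.2 (Order.covBy_add_one i.1), hi⟩

theorem terrain_subset_of_convex {C : Set (ℝ × ℝ)} (hC : Convex ℝ C) (hv : ∀ i, v i ∈ C) :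
    terrain n hn v ⊆ C :=
  iUnion_subset fun _ => hC.segment_subset (hv _) (hv _)

theorem snd_le_of_mem_terrain (hh : ∀ i, (v i).2 ≤ h) : ∀ t ∈ terrain n hn v, t.2 ≤ h :=
  terrain_subset_of_convex (convex_halfSpace_le (LinearMap.snd ℝ ℝ ℝ).isLinear h) hh

-- Over an edge the terrain is that edge alone, and the region above an edge is convex.
theorem seesT_of_mem_verticalHull_segment (hv : StrictMono fun i => (v i).1) (hij : i ⋖ j)
    (hp : p ∈ verticalHull (segment ℝ (v i) (v j)))
    (hq : q ∈ verticalHull (segment ℝ (v i) (v j))) : seesT (terrain n hn v) p q := by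
  intro x hx t ht htx
  obtain ⟨k, l, hkl, htkl⟩ := exists_covBy_of_mem_terrain ht
  obtain ⟨u, hu, hux, hux'⟩ :=
    (convex_verticalHull (convex_segment (v i) (v j))).segment_subset hp hq hx
  have hut : u.1 = t.1 := hux.trans htx.symm
  have htij := mem_segment_of_fst_mem_Icc hv hij hkl htkl
    (hut ▸ fst_mem_Icc_of_mem_segment hv hij.lt hu)
  rwa [← injOn_fst_segment (hv hij.lt).ne hu htij hut]

theorem exists_vertex_seesT (hv : StrictMono fun i => (v i).1) (hh : ∀ i, (v i).2 ≤ h)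
    (hw : w ∈ terrain n hn v) : ∃ i, seesT (terrain n hn v) w ((v i).1, h) := by
  obtain ⟨i, j, hij, hwij⟩ := exists_covBy_of_mem_terrain hw
  exact ⟨i, seesT_of_mem_verticalHull_segment hv hij ⟨w, hwij, rfl, le_rfl⟩
    ⟨v i, left_mem_segment ℝ _ _, rfl, hh i⟩⟩

theorem fst_vertex_mem_Icc (hv : StrictMono fun i => (v i).1) (i : Fin n) :
    (v i).1 ∈ Icc (v ⟨0, i.pos⟩).1 (v ⟨n - 1, Nat.sub_one_lt_of_lt i.2⟩).1 :=
  ⟨hv.monotone (Fin.le_def.2 (Nat.zero_le _)),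
    hv.monotone (Fin.le_def.2 (Nat.le_sub_one_of_lt i.2))⟩

theorem fst_mem_Icc_of_mem_terrain (hv : StrictMono fun i => (v i).1) (ht : t ∈ terrain n hn v) :
    t.1 ∈ Icc (v ⟨0, by omega⟩).1 (v ⟨n - 1, by omega⟩).1 :=
  terrain_subset_of_convex (C := Prod.fst ⁻¹' Icc _ _)
    ((convex_Icc _ _).linear_preimage (LinearMap.fst ℝ ℝ ℝ)) (fst_vertex_mem_Icc hv) ht

theorem altLine_eq_image_Icc (hv : StrictMono fun i => (v i).1) :
    altLine n hn v h = (·, h) '' Icc (v ⟨0, by omega⟩).1 (v ⟨n - 1, by omega⟩).1 := by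
  rw [altLine, ← segment_eq_Icc (fst_vertex_mem_Icc hv _).2]
  exact (Prod.image_mk_segment_left _ _ h).symm

theorem exists_visA_eq_image_Icc (hv : StrictMono fun i => (v i).1) (hh : ∀ i, (v i).2 ≤ h)
    (hw : w ∈ terrain n hn v) : ∃ a b, visA n hn v h w = (·, h) '' Icc a b := by
  have hT := snd_le_of_mem_terrain (hn := hn) hh
  obtain ⟨i, hi⟩ := exists_vertex_seesT hv hh hw
  obtain ⟨a, b, hab⟩ := exists_inter_setOf_seesT_eq_Icc (hT w hw) hT
    (fst_mem_Icc_of_mem_terrain hv hw) ⟨_, hi⟩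
  refine ⟨a, b, ?_⟩
  rw [← hab, visA, altLine_eq_image_Icc hv]
  exact (image_inter_preimage _ _ _).symm

theorem isTransversal_visA_vertices (hv : StrictMono fun i => (v i).1) (hh : ∀ i, (v i).2 ≤ h) :
    IsTransversal (terrain n hn v) (visA n hn v h) (range fun i => ((v i).1, h)) := by
  intro w hw
  obtain ⟨i, hi⟩ := exists_vertex_seesT hv hh hw
  have hiA : ((v i).1, h) ∈ altLine n hn v h :=
    altLine_eq_image_Icc hv ▸ mem_image_of_mem (·, h) (fst_vertex_mem_Icc hv i)
  exact ⟨_, ⟨hiA, hi⟩, mem_range_self i⟩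

theorem terrain_subset_iUnion_visT_iff {G : Set (ℝ × ℝ)} (hG : G ⊆ altLine n hn v h) :
    terrain n hn v ⊆ ⋃ g ∈ G, visT n hn v g ↔ IsTransversal (terrain n hn v) (visA n hn v h) G := by
  refine forall₂_congr fun w hw => ?_
  rw [mem_iUnion₂]
  exact ⟨fun ⟨g, hg, _, hgw⟩ => ⟨g, ⟨hG hg, seesT_comm.1 hgw⟩, hg⟩,
    fun ⟨g, ⟨_, hwg⟩, hg⟩ => ⟨g, hg, hw, seesT_comm.1 hwg⟩⟩

end Terrain

theorem stmt_11 (n : ℕ) (hn : 2 ≤ n) (v : Fin n → ℝ × ℝ)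
    (hmono : ∀ i j : Fin n, i < j → (v i).1 < (v j).1)
    (h : ℝ) (hh : ∀ i : Fin n, (v i).2 < h) :
    ∃ G W : Set (ℝ × ℝ),
      G.Finite ∧ G ⊆ altLine n hn v h ∧
      terrain n hn v ⊆ (⋃ g ∈ G, visT n hn v g) ∧
      W.Finite ∧ W ⊆ terrain n hn v ∧
      (∀ w ∈ W, ∀ w' ∈ W, w ≠ w' → visA n hn v h w ∩ visA n hn v h w' = ∅) ∧
      G.ncard = W.ncard ∧
      ∀ G' : Set (ℝ × ℝ), G'.Finite → G' ⊆ altLine n hn v h →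
        terrain n hn v ⊆ (⋃ g ∈ G', visT n hn v g) → G.ncard ≤ G'.ncard := by
  have hv : StrictMono fun i => (v i).1 := fun i j hij => hmono i j hij
  have hh' : ∀ i, (v i).2 ≤ h := fun i => (hh i).le
  choose! a b hab using fun w => exists_visA_eq_image_Icc (hn := hn) (w := w) hv hh'
  obtain ⟨G, W, hGfin, hGsub, hG, hWfin, hWsub, hW, hcard⟩ :=
    (isTransversal_visA_vertices hv hh').exists_ncard_eq_packing (finite_range _)
      (Prod.mk_left_injective h) hab
  have hGA : G ⊆ altLine n hn v h := hGsub.trans (iUnion₂_subset fun _ _ _ hp => hp.1)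
  refine ⟨G, W, hGfin, hGA, (terrain_subset_iUnion_visT_iff hGA).2 hG, hWfin, hWsub,
    fun w hw w' hw' hne => (hW hw hw' hne).inter_eq, hcard, fun G' hG'fin hG'A hcov => ?_⟩
  have hG' : IsTransversal (terrain n hn v) (visA n hn v h) G' :=
    (terrain_subset_iUnion_visT_iff hG'A).1 hcov
  exact hcard ▸ (hG'.mono hWsub).ncard_le hG'fin hW
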